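/- Let p be a prime, K a field of characteristic p, b ∈ ℕ with b ≤ p−1, and f ∈ K[X]. Then the (b+1)-st formal derivative of f is zero if and only if every exponent e occurring in f with nonzero coefficient satisfies e mod p ≤ b. -/

import Mathlib

open Polynomial

/-!
Differentiating `k` times multiplies the coefficient of `X ^ e` by the product
`e * (e - 1) * ⋯ * (e - k + 1)`. A prime `p` divides this product exactly when one of the factors
`e - i` with `i < k` is a multiple of `p`, that is, when the residue `e % p` is one of these `i`.
In characteristic `p` every natural number not divisible by `p` is a unit, so no other
coefficient is killed.
-/

lemma dvd_descFactorial_iff_mod_lt {p : ℕ} (hp : p.Prime) (e k : ℕ) :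
    p ∣ e.descFactorial k ↔ e % p < k := by
  rw [Nat.descFactorial_eq_prod_range, hp.prime.dvd_finsetProd_iff]
  constructor
  · rintro ⟨i, hi, hdvd⟩
    suffices e % p ≤ i from this.trans_lt (Finset.mem_range.1 hi)
    rcases le_total e i with hei | hie
    · exact (Nat.mod_le e p).trans hei
    · have hmod : i % p = e % p := (Nat.modEq_iff_dvd' hie).2 hdvd
      exact hmod ▸ Nat.mod_le i p
  · intro hlt
    exact ⟨e % p, Finset.mem_range.2 hlt, Nat.dvd_sub_mod e⟩

lemma iterate_derivative_eq_zero_iff_forall_coeff {R : Type*} [Semiring R] (k : ℕ) (f : R[X]) :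
    derivative^[k] f = 0 ↔ ∀ e, e.descFactorial k • f.coeff e = 0 := by
  simp only [Polynomial.ext_iff, coeff_iterate_derivative, coeff_zero]
  refine ⟨fun h e ↦ ?_, fun h m ↦ h (m + k)⟩
  rcases lt_or_ge e k with hlt | hge
  · rw [Nat.descFactorial_of_lt hlt, zero_nsmul]
  · simpa only [Nat.sub_add_cancel hge] using h (e - k)

lemma nsmul_eq_zero_iff_of_charP {R : Type*} [Ring R] {p : ℕ} [CharP R p] (hp : p.Prime)
    {n : ℕ} {c : R} : n • c = 0 ↔ p ∣ n ∨ c = 0 := by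
  rw [nsmul_eq_mul]
  by_cases hdvd : p ∣ n
  · simp only [(CharP.cast_eq_zero_iff R p n).2 hdvd, zero_mul, hdvd, true_or]
  · have hunit : IsUnit (n : R) := (CharP.isUnit_natCast_iff hp).2 hdvd
    simp only [hunit.mul_right_eq_zero, hdvd, false_or]

theorem stmt_8_general {R : Type*} [Ring R] {p : ℕ} [CharP R p] (hp : p.Prime) (k : ℕ)
    (f : R[X]) : derivative^[k] f = 0 ↔ ∀ e ∈ f.support, e % p < k := by
  rw [iterate_derivative_eq_zero_iff_forall_coeff]
  refine forall_congr' fun e ↦ ?_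
  rw [nsmul_eq_zero_iff_of_charP hp, dvd_descFactorial_iff_mod_lt hp, mem_support_iff,
    or_comm, or_iff_not_imp_left]

/-- Let `p` be a prime, `K` a field of characteristic `p`, `b ≤ p−1` and `f ∈ K[X]`.
Then the `(b+1)`-st formal derivative of `f` vanishes if and only if every exponent `e`
occurring in `f` with nonzero coefficient satisfies `e % p ≤ b`. -/
theorem stmt_8 (p : ℕ) (hp : p.Prime) (K : Type*) [Field K] [CharP K p]
    (b : ℕ) (hb : b ≤ p - 1) (f : K[X]) :
    derivative^[b + 1] f = 0 ↔ ∀ e ∈ f.support, e % p ≤ b := by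
  simpa only [Nat.lt_succ_iff] using stmt_8_general hp (b + 1) f
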